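/- arXiv:2502.08055 — 4 statements merged into one kernel-verified Lean document; each statement's English description precedes it below -/
import Mathlib

section
/- Let n, t be natural numbers with n > 2·t, and let x, y : Fin n → ℝ satisfy x i ≤ y i for every i. Then the t-trimmed mean of x is less than or equal to the t-trimmed mean of y. -/
/-- The `k`-th order statistic (0-indexed) of `x : Fin n → ℝ`: the `k`-th entry of
the list obtained by sorting the `n` values of `x` in ascending order. -/
noncomputable def orderStat {n : ℕ} (x : Fin n → ℝ) (k : Fin n) : ℝ :=
  x (Tuple.sort x k)

/-- The `t`-trimmed mean of `x : Fin n → ℝ` (for `n > 2·t`): the average of the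
entries that remain after sorting `x` in ascending order and discarding the
smallest `t` and the largest `t` entries. -/
noncomputable def trimmedMean {n : ℕ} (t : ℕ) (x : Fin n → ℝ) : ℝ :=
  (∑ k ∈ Finset.univ.filter (fun k : Fin n => t ≤ (k : ℕ) ∧ (k : ℕ) < n - t),
      orderStat x k) / ((n - 2 * t : ℕ) : ℝ)

theorem orderStat_mono_aux {n : ℕ} (x y : Fin n → ℝ) (h : ∀ i, x i ≤ y i) (k : Fin n) :
    orderStat x k ≤ orderStat y k := by
  have hint : ¬ Disjoint ((Finset.Iic k).map (Tuple.sort y).toEmbedding)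
      ((Finset.Ici k).map (Tuple.sort x).toEmbedding) := by
    intro hd
    have h1 := Finset.card_union_of_disjoint hd
    have h2 := Finset.card_le_univ ((Finset.Iic k).map (Tuple.sort y).toEmbedding ∪
      (Finset.Ici k).map (Tuple.sort x).toEmbedding)
    rw [h1, Finset.card_map, Finset.card_map, Fin.card_Iic, Fin.card_Ici, Fintype.card_fin] at h2
    have := k.isLt
    omega
  obtain ⟨i, hi1, hi2⟩ := Finset.not_disjoint_iff.mp hint
  obtain ⟨a, ha, rfl⟩ := Finset.mem_map.mp hi1
  obtain ⟨b, hb, hab⟩ := Finset.mem_map.mp hi2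
  have e1 : x (Tuple.sort x k) ≤ x (Tuple.sort x b) :=
    Tuple.monotone_sort x (Finset.mem_Ici.mp hb)
  have e2 : y (Tuple.sort y a) ≤ y (Tuple.sort y k) :=
    Tuple.monotone_sort y (Finset.mem_Iic.mp ha)
  have hab' : Tuple.sort x b = Tuple.sort y a := hab
  rw [hab'] at e1
  exact e1.trans ((h _).trans e2)

/-- **Monotonicity of the trimmed mean.** If `n > 2·t` and `x i ≤ y i` for every `i`,
then the `t`-trimmed mean of `x` is at most the `t`-trimmed mean of `y`. -/
theorem trimmedMean_mono {n t : ℕ} (hn : 2 * t < n) (x y : Fin n → ℝ)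
    (h : ∀ i, x i ≤ y i) :
    trimmedMean t x ≤ trimmedMean t y := by
  unfold trimmedMean
  exact div_le_div_of_nonneg_right
    (Finset.sum_le_sum fun k _ => orderStat_mono_aux x y h k) (Nat.cast_nonneg _)
end

section
/- Let m, k be natural numbers, M ⊆ Fin m a set of malicious clients, and s, s' : Fin m → ℝ aggregated check scores before and after the extreme manipulation. Suppose i ∈ M, s' i ≥ s i, s' j ≤ s j for every j ∉ M, and |{ j ∉ M : s j > s i }| + |M| ≤ k. Then |{ j : j ≠ i and s' j > s' i }| < k; that is, client i remains among the top k scorers after the manipulation. -/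
/-- **A malicious update included in aggregation remains included under the
extreme manipulation.** Let `M ⊆ Fin m` be the malicious clients and `s`, `s'`
the aggregated check scores before and after the extreme manipulation. Suppose
`i ∈ M`, `s' i ≥ s i`, `s' j ≤ s j` for every `j ∉ M`, and
`|{ j ∉ M : s j > s i }| + |M| ≤ k`. Then fewer than `k` other clients strictly
outscore `i` after the manipulation, i.e. `i` remains among the top `k` scorers. -/
theorem malicious_remains_top_k {m k : ℕ} (M : Finset (Fin m))
    (s s' : Fin m → ℝ) (i : Fin m) (hi : i ∈ M) (hi' : s i ≤ s' i)
    (hben : ∀ j ∉ M, s' j ≤ s j)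
    (htop : (Finset.univ.filter (fun j => j ∉ M ∧ s i < s j)).card + M.card ≤ k) :
    (Finset.univ.filter (fun j => j ≠ i ∧ s' i < s' j)).card < k := by
  have hsub : Finset.univ.filter (fun j => j ≠ i ∧ s' i < s' j) ⊆
      Finset.univ.filter (fun j => j ∉ M ∧ s i < s j) ∪ M.erase i := by
    intro j hj
    simp only [Finset.mem_filter, Finset.mem_univ, true_and, Finset.mem_union,
      Finset.mem_erase] at hj ⊢
    by_cases hM : j ∈ M
    · exact Or.inr ⟨hj.1, hM⟩
    · exact Or.inl ⟨hM, by linarith [hben j hM, hj.2]⟩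
  have h1 := (Finset.card_le_card hsub).trans (Finset.card_union_le _ _)
  have h2 := Finset.card_erase_lt_of_mem hi
  omega
end

section
/- Let m be a natural number and x : Fin (2·m + 1) → ℝ a vector of values (e.g., norms of client updates), and let H ⊆ Fin (2·m + 1) be a set of honest indices with |H| ≥ m + 1. Then the median of x lies between the minimum and the maximum of the honest values: min_{j ∈ H} x j ≤ median(x) ≤ max_{j ∈ H} x j. -/
/-- The median of a vector of odd length `2·m + 1` is its `m`-th order statistic
(0-indexed). -/
noncomputable def medianVec {m : ℕ} (x : Fin (2 * m + 1) → ℝ) : ℝ :=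
  orderStat x ⟨m, by omega⟩

/-- **With an honest majority, the median lies in the range of honest values.**
Let `x : Fin (2·m + 1) → ℝ` and let `H` be a set of honest indices with
`|H| ≥ m + 1`. Then `min_{j ∈ H} x j ≤ median(x) ≤ max_{j ∈ H} x j`. -/
theorem median_between_honest_min_max {m : ℕ} (x : Fin (2 * m + 1) → ℝ)
    (H : Finset (Fin (2 * m + 1))) (hH : m + 1 ≤ H.card) :
    H.inf' (Finset.card_pos.mp (lt_of_lt_of_le (Nat.succ_pos m) hH)) x ≤ medianVec x ∧
      medianVec x ≤ H.sup' (Finset.card_pos.mp (lt_of_lt_of_le (Nat.succ_pos m) hH)) x := by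
  have hmono : Monotone (x ∘ Tuple.sort x) := Tuple.monotone_sort x
  have hcard : (H.map (Tuple.sort x).symm.toEmbedding).card = H.card := Finset.card_map _
  constructor
  · obtain ⟨j, hj, hle⟩ : ∃ j ∈ H, (Tuple.sort x).symm j ≤ ⟨m, by omega⟩ := by
      by_contra! hcon
      have hsub : H.map (Tuple.sort x).symm.toEmbedding ⊆ Finset.Ioi ⟨m, by omega⟩ := by
        intro i hi
        obtain ⟨j, hj, rfl⟩ := Finset.mem_map.mp hi
        exact Finset.mem_Ioi.mpr (hcon j hj)
      have h := Finset.card_le_card hsub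
      rw [hcard, Fin.card_Ioi] at h
      simp only at h
      omega
    have h := hmono hle
    simp only [Function.comp_apply, Equiv.apply_symm_apply] at h
    exact (Finset.inf'_le x hj).trans h
  · obtain ⟨j, hj, hle⟩ : ∃ j ∈ H, ⟨m, by omega⟩ ≤ (Tuple.sort x).symm j := by
      by_contra! hcon
      have hsub : H.map (Tuple.sort x).symm.toEmbedding ⊆ Finset.Iio ⟨m, by omega⟩ := by
        intro i hi
        obtain ⟨j, hj, rfl⟩ := Finset.mem_map.mp hi
        exact Finset.mem_Iio.mpr (hcon j hj)
      have h := Finset.card_le_card hsub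
      rw [hcard, Fin.card_Iio] at h
      simp only at h
      omega
    have h := hmono hle
    simp only [Function.comp_apply, Equiv.apply_symm_apply] at h
    exact le_trans h (Finset.le_sup' x hj)
end

section
/- Let p > 0 and r ≥ 1, and fix a secret x ∈ ZMod p. Consider the additive secret-sharing distribution in which the first r − 1 shares s₁, …, s_{r−1} are sampled independently and uniformly from ZMod p and the last share is set to s_r = x − (s₁ + ⋯ + s_{r−1}), so that the shares always sum to x. Then for every proper subset T ⊊ Fin r of parties, the joint distribution of the shares held by the parties in T is the uniform distribution on functions T → ZMod p, independent of the secret x. In particular, any coalition holding fewer than r shares learns nothing about x. -/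
/-- Additive secret sharing of `x : ZMod p` among `r` parties: the first `r − 1`
shares are sampled independently and uniformly from `ZMod p`, and the last share
is set so that all shares sum to `x`. The result is the pushforward of the uniform
distribution on `Fin (r − 1) → ZMod p` under the map producing the full share
vector. (The instance `[NeZero p]` says exactly that `p > 0`.) -/
noncomputable def additiveShares (p r : ℕ) [NeZero p] (x : ZMod p) :
    PMF (Fin r → ZMod p) :=
  PMF.map
    (fun g (i : Fin r) =>
      if h : (i : ℕ) < r - 1 then g ⟨(i : ℕ), h⟩ else x - ∑ j, g j)
    (PMF.uniformOfFintype (Fin (r - 1) → ZMod p))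

theorem map_uniform_of_affine {A B : Type*} [Fintype A] [Nonempty A] [Fintype B] [Nonempty B]
    [AddCommGroup A] [AddCommGroup B] (f : A → B)
    (hf : ∀ a b c, f (a + (b - c)) = f a + (f b - f c)) (hs : Function.Surjective f) :
    PMF.map f (PMF.uniformOfFintype A) = PMF.uniformOfFintype B := by
  classical
  set P := PMF.map f (PMF.uniformOfFintype A) with hP
  have key : ∀ b b', P b = P b' := by
    intro b b'
    obtain ⟨a1, rfl⟩ := hs b
    obtain ⟨a2, rfl⟩ := hs b'
    symm
    rw [hP, PMF.map_apply, PMF.map_apply, ← (Equiv.addRight (a2 - a1)).tsum_eq]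
    refine tsum_congr fun a => ?_
    have : (f a1 = f a) ↔ (f a2 = f (a + (a2 - a1))) := by
      rw [hf]
      constructor
      · intro h
        rw [← h]
        abel
      · intro h
        have h2 : f a - f a1 = 0 := by
          have h3 : f a - f a1 = (f a + (f a2 - f a1)) - f a2 := by abel
          rw [h3, ← h, sub_self]
        exact (sub_eq_zero.mp h2).symm
    simp only [Equiv.coe_addRight, PMF.uniformOfFintype_apply, this]
  ext b
  have h1 := P.tsum_coe
  rw [tsum_fintype, Finset.sum_congr rfl (fun b' _ => key b' b), Finset.sum_const,
    nsmul_eq_mul, Finset.card_univ] at h1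
  rw [PMF.uniformOfFintype_apply]
  rw [mul_comm] at h1
  exact ENNReal.eq_inv_of_mul_eq_one_left h1

/-- **Perfect privacy of additive secret sharing.**
For `p > 0`, `r ≥ 1` and any secret `x : ZMod p`, and for every proper subset
`T ⊊ Fin r` of parties, the joint distribution of the shares held by the parties
in `T` is the uniform distribution on functions `T → ZMod p`, independent of the
secret `x`: any coalition holding fewer than `r` shares learns nothing about `x`. -/
theorem additiveShares_privacy (p r : ℕ) [NeZero p] (hr : 1 ≤ r)
    (x : ZMod p) (T : Finset (Fin r)) (hT : T ⊂ Finset.univ) :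
    PMF.map (fun f (i : T) => f i) (additiveShares p r x) =
      PMF.uniformOfFintype ((i : T) → ZMod p) := by
  classical
  obtain ⟨n, rfl⟩ : ∃ n, r = n + 1 := ⟨r - 1, by omega⟩
  obtain ⟨k, -, hk⟩ := Finset.exists_of_ssubset hT
  rw [additiveShares, PMF.map_comp]
  apply map_uniform_of_affine
  · intro a b c
    funext i
    simp only [Function.comp_apply, Pi.add_apply, Pi.sub_apply]
    split_ifs
    · rfl
    · rw [Finset.sum_add_distrib, Finset.sum_sub_distrib]
      abel
  · intro t
    let u : Fin (n + 1) → ZMod p := fun i => if h : i ∈ T then t ⟨i, h⟩ else 0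
    let s : Fin (n + 1) → ZMod p := Function.update u k (x - ∑ i ∈ Finset.univ \ {k}, u i)
    have hsum : ∑ i, s i = x := by
      rw [Finset.sum_update_of_mem (Finset.mem_univ k)]
      abel
    have hsT : ∀ i : T, s i = t i := by
      intro i
      have hik : (i : Fin (n + 1)) ≠ k := fun h => hk (h ▸ i.2)
      simp [s, u, Function.update_of_ne hik]
    refine ⟨fun j : Fin n => s j.castSucc, ?_⟩
    funext i
    rw [← hsT i]
    simp only [Function.comp_apply]
    split_ifs with h
    · rfl
    · have hl : (i : Fin (n + 1)) = Fin.last n := by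
        apply Fin.ext
        have := (i : Fin (n + 1)).isLt
        simp only [Fin.val_last]
        omega
      rw [Fin.sum_univ_castSucc] at hsum
      rw [hl, ← hsum]
      exact add_sub_cancel_left _ _
end
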